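/- arXiv:1907.09152 — 2 statements merged into one kernel-verified Lean document; each statement's English description precedes it below -/
import Mathlib

section
/- For any positive integers k, l, m, n, the Toeplitz graph on vertex set {1,…,n} with edges { ij : (|i−j| mod (k+l+m)) ∈ {k+1, k+2, …, k+l} } is word-representable. -/
/-- Two letters `x` and `y` alternate in the word `w` if, after deleting all
letters other than `x` and `y`, consecutive letters always differ
(i.e. the restriction has the form `xyxy⋯` or `yxyx⋯`). -/
def Alternates {V : Type*} [DecidableEq V] (w : List V) (x y : V) : Prop :=
  (w.filter (fun z => z = x || z = y)).Chain' (· ≠ ·)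

/-- A word `w` represents the graph `G`: every vertex occurs in `w`, and two
distinct letters alternate in `w` iff they are adjacent in `G`. -/
def Represents {V : Type*} [DecidableEq V] (w : List V) (G : SimpleGraph V) : Prop :=
  (∀ v, v ∈ w) ∧ ∀ x y : V, x ≠ y → (Alternates w x y ↔ G.Adj x y)

/-- A graph is word-representable if some word represents it. -/
def WordRepresentable {V : Type*} [DecidableEq V] (G : SimpleGraph V) : Prop :=
  ∃ w : List V, Represents w G

/-!
Order the vertices by residue modulo `p = k + l + m`, where moving to a larger integer must raise
the residue by at least `k + 1` and moving to a smaller one by at least `m`. The edges of the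
Toeplitz graph are comparabilities of this order, and the pairs `x < y` lying between the ends of
an edge are again edges, so the order gives a semi-transitive orientation.

Every such graph is word-representable (Halldórsson, Kitaev and Pyatkin). In a linear extension of
the order each edge `u < v` reads `uv`, and this pattern `uv⋯uv` survives concatenation. It is
therefore enough to build, for each non-edge `xy`, one word in which all edges read `uv⋯uv` but
`x` and `y` do not alternate. If `x` and `y` are incomparable, concatenate two linear extensions
that order them oppositely. If `x < y`, cut two copies of a linear extension at different up-sets,
both containing `y` but not `x`, and interleave the pieces so that `x` is read twice before `y`.
-/

section Restriction

variable {V : Type*} [DecidableEq V] {v w : List V} {x y : V}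

/-- The restriction of the word `w` to the letters `x` and `y`, in the form used by `Alternates`. -/
def restrictPair (w : List V) (x y : V) : List V :=
  w.filter (fun z => z = x || z = y)

theorem alternates_iff_isChain_restrictPair :
    Alternates w x y ↔ (restrictPair w x y).IsChain (· ≠ ·) :=
  Iff.rfl

theorem alternates_comm : Alternates w x y ↔ Alternates w y x := by
  simp only [Alternates, Bool.or_comm]

theorem Alternates.of_infix (hw : Alternates w x y) (h : v <:+: w) : Alternates v x y :=
  List.IsChain.infix hw (h.filter _)

theorem restrictPair_append (v w : List V) (x y : V) :
    restrictPair (v ++ w) x y = restrictPair v x y ++ restrictPair w x y :=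
  List.filter_append ..

theorem restrictPair_filter (p : V → Bool) (w : List V) (x y : V) :
    restrictPair (w.filter p) x y = (restrictPair w x y).filter p :=
  List.filter_comm ..

theorem restrictPair_eq_or_of_nodup (hw : w.Nodup) (hx : x ∈ w) (hy : y ∈ w) (hxy : x ≠ y) :
    restrictPair w x y = [x, y] ∨ restrictPair w x y = [y, x] := by
  refine List.perm_pair.mp ((List.perm_ext_iff_of_nodup (hw.filter _) (by simpa using hxy)).mpr ?_)
  intro z
  simp only [List.mem_filter, Bool.or_eq_true, decide_eq_true_eq, List.mem_cons,
    List.not_mem_nil, or_false, and_iff_right_iff_imp]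
  rintro (rfl | rfl) <;> assumption

/-- The word `w` restricts to `xyxy⋯xy` on the letters `x` and `y`. Unlike mere alternation, this
is stable under concatenation. -/
def AlternatesFrom (w : List V) (x y : V) : Prop :=
  ∃ n, restrictPair w x y = (List.replicate n [x, y]).flatten

theorem AlternatesFrom.nil (x y : V) : AlternatesFrom [] x y :=
  ⟨0, rfl⟩

theorem AlternatesFrom.append (hv : AlternatesFrom v x y) (hw : AlternatesFrom w x y) :
    AlternatesFrom (v ++ w) x y := by
  obtain ⟨m, hm⟩ := hv
  obtain ⟨n, hn⟩ := hw
  exact ⟨m + n, by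
    rw [restrictPair_append, hm, hn, List.replicate_add, List.flatten_append]⟩

theorem AlternatesFrom.flatten {L : List (List V)} (hL : ∀ w ∈ L, AlternatesFrom w x y) :
    AlternatesFrom L.flatten x y := by
  induction L with
  | nil => exact .nil x y
  | cons w L ih =>
    rw [List.forall_mem_cons] at hL
    exact hL.1.append (ih hL.2)

theorem AlternatesFrom.alternates (hw : AlternatesFrom w x y) (hxy : x ≠ y) :
    Alternates w x y := by
  obtain ⟨n, hn⟩ := hw
  rw [alternates_iff_isChain_restrictPair, hn, List.isChain_flatten (by simp)]
  refine ⟨fun l hl => ?_, List.isChain_replicate_of_rel n (by simpa using hxy.symm)⟩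
  rw [List.eq_of_mem_replicate hl]
  simpa using hxy

/-- The word `t|Uᶜ t|Dᶜ t|U t|D`, for `U ⊆ D`: two copies of `t`, cut at `U` and at `D`, with the
initial part of the second copy moved ahead of the final part of the first. -/
def interleavedCuts (t : List V) (U D : Set V) [DecidablePred (· ∈ U)] [DecidablePred (· ∈ D)] :
    List V :=
  t.filter (· ∉ U) ++ t.filter (· ∉ D) ++ t.filter (· ∈ U) ++ t.filter (· ∈ D)

theorem restrictPair_interleavedCuts (t : List V) (U D : Set V) [DecidablePred (· ∈ U)]
    [DecidablePred (· ∈ D)] (x y : V) :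
    restrictPair (interleavedCuts t U D) x y = interleavedCuts (restrictPair t x y) U D := by
  simp only [interleavedCuts, restrictPair_append, restrictPair_filter]

end Restriction

section OrientedEdges

variable {V : Type*} [DecidableEq V]

/-- The word `w` restricts to `uv⋯uv` on every edge `uv` with `u < v`. -/
def AlternatesOnEdges [LT V] (G : SimpleGraph V) (w : List V) : Prop :=
  ∀ ⦃u v⦄, G.Adj u v → u < v → AlternatesFrom w u v

variable [LT V] {G : SimpleGraph V} {v w : List V}

theorem AlternatesOnEdges.nil : AlternatesOnEdges G [] :=
  fun u v _ _ => .nil u v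

theorem AlternatesOnEdges.append (hv : AlternatesOnEdges G v) (hw : AlternatesOnEdges G w) :
    AlternatesOnEdges G (v ++ w) :=
  fun _ _ h hlt => (hv h hlt).append (hw h hlt)

theorem AlternatesOnEdges.flatten {L : List (List V)} (hL : ∀ w ∈ L, AlternatesOnEdges G w) :
    AlternatesOnEdges G L.flatten :=
  fun _ _ h hlt => .flatten fun w hw => hL w hw h hlt

theorem AlternatesOnEdges.alternates (hw : AlternatesOnEdges G w)
    (hcomp : ∀ ⦃u v⦄, G.Adj u v → u < v ∨ v < u) {x y : V} (hxy : G.Adj x y) :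
    Alternates w x y :=
  (hcomp hxy).elim (fun hlt => (hw hxy hlt).alternates hxy.ne)
    fun hlt => alternates_comm.mp ((hw hxy.symm hlt).alternates hxy.ne')

theorem wordRepresentable_of_forall_exists_not_alternates [Finite V]
    (hcomp : ∀ ⦃u v⦄, G.Adj u v → u < v ∨ v < u)
    (hw : AlternatesOnEdges G w) (hmem : ∀ v, v ∈ w)
    (hsep : ∀ x y, x ≠ y → ¬ G.Adj x y → ∃ s, AlternatesOnEdges G s ∧ ¬ Alternates s x y) :
    WordRepresentable G := by
  classical
  cases nonempty_fintype V
  have hpair (e : V × V) : ∃ s, AlternatesOnEdges G s ∧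
      (e.1 ≠ e.2 → ¬ G.Adj e.1 e.2 → ¬ Alternates s e.1 e.2) := by
    by_cases he : e.1 ≠ e.2 ∧ ¬ G.Adj e.1 e.2
    · obtain ⟨s, hs, hse⟩ := hsep e.1 e.2 he.1 he.2
      exact ⟨s, hs, fun _ _ => hse⟩
    · exact ⟨[], .nil, fun h₁ h₂ => (he ⟨h₁, h₂⟩).elim⟩
  choose sep hsep_edges hsep_pair using hpair
  let L : List (List V) := Finset.univ.toList.map sep
  have hL : AlternatesOnEdges G L.flatten :=
    .flatten <| List.forall_mem_map.mpr fun e _ => hsep_edges e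
  refine ⟨w ++ L.flatten, fun v => List.mem_append_left _ (hmem v), fun x y hxy => ⟨fun h => ?_,
    (hw.append hL).alternates hcomp⟩⟩
  by_contra hadj
  have hfactor : sep (x, y) <:+: w ++ L.flatten :=
    (List.infix_of_mem_flatten (List.mem_map_of_mem (by simp))).trans
      (List.suffix_append _ _).isInfix
  exact hsep_pair (x, y) hxy hadj (h.of_infix hfactor)

end OrientedEdges

section LinearExtension

variable {V : Type*} [PartialOrder V] {t : List V}

/-- The list `t` enumerates the order `V` along a linear extension. Reflexivity of `≤` makes the
second condition exclude repetitions as well. -/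
def IsLinearExtension (t : List V) : Prop :=
  (∀ v, v ∈ t) ∧ t.Pairwise (fun a b => ¬ b ≤ a)

theorem exists_isLinearExtension (V : Type*) [PartialOrder V] [Finite V] :
    ∃ t : List V, IsLinearExtension t := by
  classical
  cases nonempty_fintype V
  obtain ⟨s, _, hs⟩ := extend_partialOrder ((· ≤ ·) : V → V → Prop)
  have hsorted : (Finset.univ.sort s).Pairwise fun a b => s a b ∧ a ≠ b :=
    (Finset.pairwise_sort _ s).and (Finset.sort_nodup _ s)
  exact ⟨Finset.univ.sort s, by simp, hsorted.imp fun hab hba =>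
    hab.2 (antisymm_of s hab.1 (hs _ _ hba))⟩

theorem IsLinearExtension.nodup (ht : IsLinearExtension t) : t.Nodup :=
  ht.2.imp fun h heq => h heq.ge

theorem IsLinearExtension.filter_notMem_append_filter_mem (ht : IsLinearExtension t) {A : Set V}
    [DecidablePred (· ∈ A)] (hA : IsUpperSet A) :
    IsLinearExtension (t.filter (· ∉ A) ++ t.filter (· ∈ A)) := by
  refine ⟨fun v => ?_, List.pairwise_append.mpr ⟨ht.2.filter _, ht.2.filter _, ?_⟩⟩
  · by_cases hv : v ∈ A <;> simp [hv, ht.1 v]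
  · intro a ha b hb hba
    simp only [List.mem_filter, decide_eq_true_eq] at ha hb
    exact ha.2 (hA hba hb.2)

variable [DecidableEq V] {x y : V}

theorem IsLinearExtension.restrictPair_eq_or (ht : IsLinearExtension t) (hxy : x ≠ y) :
    restrictPair t x y = [x, y] ∨ restrictPair t x y = [y, x] :=
  restrictPair_eq_or_of_nodup ht.nodup (ht.1 x) (ht.1 y) hxy

theorem IsLinearExtension.restrictPair_of_lt (ht : IsLinearExtension t) (hxy : x < y) :
    restrictPair t x y = [x, y] := by
  refine (ht.restrictPair_eq_or hxy.ne).resolve_right fun h => ?_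
  have hpairwise : (restrictPair t x y).Pairwise (fun a b => ¬ b ≤ a) := ht.2.filter _
  simp [h, hxy.le] at hpairwise

theorem IsLinearExtension.alternatesOnEdges (ht : IsLinearExtension t) (G : SimpleGraph V) :
    AlternatesOnEdges G t :=
  fun _ _ _ hlt => ⟨1, ht.restrictPair_of_lt hlt⟩

theorem IsLinearExtension.exists_restrictPair_of_not_ge (ht : IsLinearExtension t)
    (hyx : ¬ y ≤ x) : ∃ s, IsLinearExtension s ∧ restrictPair s x y = [x, y] := by
  classical
  refine ⟨_, ht.filter_notMem_append_filter_mem (isUpperSet_Ici y), ?_⟩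
  have hne : x ≠ y := fun h => hyx h.ge
  rw [restrictPair_append, restrictPair_filter, restrictPair_filter]
  rcases ht.restrictPair_eq_or hne with h | h <;> simp [h, hyx]

theorem exists_alternatesOnEdges_not_alternates_of_incomparable [Finite V] (G : SimpleGraph V)
    (hxy : ¬ x ≤ y) (hyx : ¬ y ≤ x) :
    ∃ w, AlternatesOnEdges G w ∧ ¬ Alternates w x y := by
  obtain ⟨t, ht⟩ := exists_isLinearExtension V
  obtain ⟨s, hs, hsxy⟩ := ht.exists_restrictPair_of_not_ge hyx
  obtain ⟨s', hs', hsyx⟩ := ht.exists_restrictPair_of_not_ge hxy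
  refine ⟨s ++ s', (hs.alternatesOnEdges G).append (hs'.alternatesOnEdges G), ?_⟩
  have hsxy' : restrictPair s' x y = [y, x] := by
    simpa only [restrictPair, Bool.or_comm] using hsyx
  simp [alternates_iff_isChain_restrictPair, restrictPair_append, hsxy, hsxy']

end LinearExtension

section Semitransitive

variable {V : Type*} [PartialOrder V] [DecidableEq V] {G : SimpleGraph V} {t : List V} {x y : V}

theorem IsLinearExtension.alternatesOnEdges_interleavedCuts (ht : IsLinearExtension t)
    {U D : Set V} [DecidablePred (· ∈ U)] [DecidablePred (· ∈ D)] (hU : IsUpperSet U)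
    (hD : IsUpperSet D) (hedge : ∀ ⦃u v⦄, G.Adj u v → u < v → v ∈ U → u ∈ D) :
    AlternatesOnEdges G (interleavedCuts t U D) := by
  intro u v huv hlt
  refine ⟨2, ?_⟩
  rw [restrictPair_interleavedCuts, ht.restrictPair_of_lt hlt]
  by_cases hvU : v ∈ U
  · have huD : u ∈ D := hedge huv hlt hvU
    by_cases huU : u ∈ U <;> simp [interleavedCuts, huU, hvU, huD, hD hlt.le huD]
  · have huU : u ∉ U := fun h => hvU (hU hlt.le h)
    by_cases huD : u ∈ D
    · simp [interleavedCuts, huU, hvU, huD, hD hlt.le huD]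
    · by_cases hvD : v ∈ D <;> simp [interleavedCuts, huU, hvU, huD, hvD]

theorem IsLinearExtension.not_alternates_interleavedCuts (ht : IsLinearExtension t)
    {U D : Set V} [DecidablePred (· ∈ U)] [DecidablePred (· ∈ D)] (hUD : U ⊆ D) (hxy : x < y)
    (hx : x ∉ D) (hy : y ∈ U) : ¬ Alternates (interleavedCuts t U D) x y := by
  have hxU : x ∉ U := fun h => hx (hUD h)
  have hyD : y ∈ D := hUD hy
  rw [alternates_iff_isChain_restrictPair, restrictPair_interleavedCuts, ht.restrictPair_of_lt hxy]
  simp [interleavedCuts, hx, hy, hxU, hyD]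

/-- The partial order on the vertices induces a semi-transitive orientation of `G`, in which an
edge points to its larger end. The directed paths of the usual definition are replaced by the
order: for the reachability order of an acyclic orientation, `adj_of_le_of_lt_of_le` says that
there are no shortcuts. -/
structure IsSemitransitive (G : SimpleGraph V) : Prop where
  lt_or_gt_of_adj : ∀ ⦃u v⦄, G.Adj u v → u < v ∨ v < u
  adj_of_le_of_lt_of_le : ∀ ⦃u x y v⦄, G.Adj u v → u ≤ x → x < y → y ≤ v → G.Adj x y

theorem IsSemitransitive.exists_not_alternates_of_lt [Finite V] (hG : IsSemitransitive G)
    (hxy : x < y) (hadj : ¬ G.Adj x y) : ∃ w, AlternatesOnEdges G w ∧ ¬ Alternates w x y := by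
  classical
  obtain ⟨t, ht⟩ := exists_isLinearExtension V
  let U : Set V := Set.Ici y
  let D : UpperSet V := upperClosure (U ∪ {u | ∃ v ∈ U, G.Adj u v})
  have hUD : U ⊆ D := fun z hz => subset_upperClosure (Or.inl hz)
  have hedge : ∀ ⦃u v⦄, G.Adj u v → u < v → v ∈ U → u ∈ D :=
    fun u v huv _ hv => subset_upperClosure (Or.inr ⟨v, hv, huv⟩)
  have hx : x ∉ D := by
    rw [mem_upperClosure]
    rintro ⟨u, hu | ⟨v, hv, huv⟩, hux⟩
    · exact (hu.trans hux).not_gt hxy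
    · exact hadj (hG.adj_of_le_of_lt_of_le huv hux hxy hv)
  exact ⟨interleavedCuts t U D,
    ht.alternatesOnEdges_interleavedCuts (isUpperSet_Ici y) D.upper hedge,
    ht.not_alternates_interleavedCuts hUD hxy hx Set.self_mem_Ici⟩

theorem IsSemitransitive.exists_not_alternates [Finite V] (hG : IsSemitransitive G)
    (hne : x ≠ y) (hadj : ¬ G.Adj x y) : ∃ w, AlternatesOnEdges G w ∧ ¬ Alternates w x y := by
  by_cases hxy : x ≤ y
  · exact hG.exists_not_alternates_of_lt (hxy.lt_of_ne hne) hadj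
  by_cases hyx : y ≤ x
  · obtain ⟨w, hw, hyx⟩ := hG.exists_not_alternates_of_lt (hyx.lt_of_ne' hne) (mt G.adj_symm hadj)
    exact ⟨w, hw, mt alternates_comm.mp hyx⟩
  · exact exists_alternatesOnEdges_not_alternates_of_incomparable G hxy hyx

theorem IsSemitransitive.wordRepresentable [Finite V] (hG : IsSemitransitive G) :
    WordRepresentable G := by
  obtain ⟨t, ht⟩ := exists_isLinearExtension V
  exact wordRepresentable_of_forall_exists_not_alternates hG.lt_or_gt_of_adj
    (ht.alternatesOnEdges G) ht.1 fun _ _ => hG.exists_not_alternates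

end Semitransitive

section Toeplitz

variable {p lo hi : ℕ} {a b : ℤ}

/-- The adjacency relation of a Toeplitz pattern on the integers: the residue of `|a - b|` modulo
`p` lies in the interval `[lo, hi]`. The pattern `0^k 1^l 0^m` has `p = k + l + m`, `lo = k + 1`
and `hi = k + l`. -/
def ToeplitzRel (p lo hi : ℕ) (a b : ℤ) : Prop :=
  lo ≤ (a - b).natAbs % p ∧ (a - b).natAbs % p ≤ hi

theorem toeplitzRel_comm : ToeplitzRel p lo hi a b ↔ ToeplitzRel p lo hi b a := by
  rw [ToeplitzRel, ToeplitzRel, ← Int.natAbs_neg, neg_sub]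

theorem not_toeplitzRel_self (hlo : 0 < lo) (a : ℤ) : ¬ ToeplitzRel p lo hi a a := by
  simp [ToeplitzRel, hlo.ne']

theorem sub_emod_eq_ite (hp : 0 < p) (a b : ℤ) :
    (b - a) % p = if a % p ≤ b % p then b % p - a % p else b % p - a % p + p := by
  have hp' : (0 : ℤ) < p := by exact_mod_cast hp
  have ha := Int.emod_nonneg a hp'.ne'
  have hb := Int.emod_nonneg b hp'.ne'
  have ha' := Int.emod_lt_of_pos a hp'
  have hb' := Int.emod_lt_of_pos b hp'
  rw [Int.sub_emod]
  split_ifs with h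
  · exact Int.emod_eq_of_lt (by linarith) (by linarith)
  · rw [← Int.add_emod_right]
    exact Int.emod_eq_of_lt (by linarith) (by linarith)

theorem natAbs_sub_mod_of_le (hab : a ≤ b) : (((a - b).natAbs % p : ℕ) : ℤ) = (b - a) % p := by
  rw [Int.natCast_mod, Int.natCast_natAbs, abs_sub_comm, abs_of_nonneg (sub_nonneg.mpr hab)]

theorem toeplitzRel_iff_of_emod_le (hlo : 0 < lo) (hhi : hi < p) (hab : a % p ≤ b % p) :
    ToeplitzRel p lo hi a b ↔
      (a < b ∧ a % p + lo ≤ b % p ∧ b % p ≤ a % p + hi) ∨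
      (b < a ∧ a % p + p ≤ b % p + hi ∧ b % p + lo ≤ a % p + p) := by
  have hp : 0 < p := by omega
  rcases lt_trichotomy a b with h | rfl | h
  · have hmod := natAbs_sub_mod_of_le (p := p) h.le
    rw [sub_emod_eq_ite hp, if_pos hab] at hmod
    unfold ToeplitzRel
    omega
  · simp [not_toeplitzRel_self hlo]
  · have hmod := natAbs_sub_mod_of_le (p := p) h.le
    rw [sub_emod_eq_ite hp] at hmod
    rw [toeplitzRel_comm, ToeplitzRel]
    split_ifs at hmod <;> omega

/-- The strict order on the integers in which the residue modulo `p` grows by at least `lo` when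
the integer increases, and by at least `p - hi` when it decreases. These are the smallest residue
differences of edges of `ToeplitzRel p lo hi` in the two directions. -/
def ResidueLT (p lo hi : ℕ) (a b : ℤ) : Prop :=
  (a < b ∧ a % p + lo ≤ b % p) ∨ (b < a ∧ a % p + p ≤ b % p + hi)

theorem isStrictOrder_residueLT (hlo : 0 < lo) (hhi : hi < p) :
    IsStrictOrder ℤ (ResidueLT p lo hi) where
  irrefl a := by simp [ResidueLT]
  trans a b c hab hbc := by
    unfold ResidueLT at *
    rcases lt_trichotomy a c with h | rfl | h <;> omega

theorem ResidueLT.emod_lt (hlo : 0 < lo) (hhi : hi < p) (h : ResidueLT p lo hi a b) :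
    a % p < b % p := by
  unfold ResidueLT at h
  omega

theorem ToeplitzRel.residueLT_or_residueLT (hlo : 0 < lo) (hhi : hi < p)
    (h : ToeplitzRel p lo hi a b) : ResidueLT p lo hi a b ∨ ResidueLT p lo hi b a := by
  unfold ResidueLT
  rcases le_total (a % p) (b % p) with hab | hba
  · have hedge := (toeplitzRel_iff_of_emod_le hlo hhi hab).mp h
    omega
  · have hedge := (toeplitzRel_iff_of_emod_le hlo hhi hba).mp (toeplitzRel_comm.mp h)
    omega

theorem ToeplitzRel.of_between (hlo : 0 < lo) (hhi : hi < p) {u x y v : ℤ}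
    (huv : ToeplitzRel p lo hi u v) (hux : u = x ∨ ResidueLT p lo hi u x)
    (hxy : ResidueLT p lo hi x y) (hyv : y = v ∨ ResidueLT p lo hi y v) :
    ToeplitzRel p lo hi x y := by
  have hux' : u % p ≤ x % p := hux.elim (fun h => h ▸ le_rfl) fun h => (h.emod_lt hlo hhi).le
  have hxy' : x % p < y % p := hxy.emod_lt hlo hhi
  have hyv' : y % p ≤ v % p := hyv.elim (fun h => h ▸ le_rfl) fun h => (h.emod_lt hlo hhi).le
  rw [toeplitzRel_iff_of_emod_le hlo hhi (hux'.trans (hxy'.le.trans hyv'))] at huv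
  rw [toeplitzRel_iff_of_emod_le hlo hhi hxy'.le]
  unfold ResidueLT at *
  -- If `x y` runs against the direction of `u v`, then `u x` or `y v` runs along it, and its
  -- residue growth leaves at most `hi - lo` for `x y`.
  omega

theorem fromRel_toeplitzRel_adj (hlo : 0 < lo) {V : Type*} (f : V → ℤ) (i j : V) :
    (SimpleGraph.fromRel fun i j => ToeplitzRel p lo hi (f i) (f j)).Adj i j ↔
      ToeplitzRel p lo hi (f i) (f j) := by
  rw [SimpleGraph.fromRel_adj, toeplitzRel_comm (a := f j), or_self, and_iff_right_iff_imp]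
  rintro h rfl
  exact not_toeplitzRel_self hlo _ h

end Toeplitz

theorem toeplitz_0k1l0m_word_representable_general {p lo hi : ℕ} (hlo : 0 < lo) (hhi : hi < p)
    {V : Type*} [Finite V] [DecidableEq V] (f : V → ℤ) :
    WordRepresentable (SimpleGraph.fromRel fun i j => ToeplitzRel p lo hi (f i) (f j)) := by
  have := isStrictOrder_residueLT hlo hhi
  let _ : PartialOrder V := partialOrderOfSO (f ⁻¹'o ResidueLT p lo hi)
  refine IsSemitransitive.wordRepresentable ⟨fun u v huv => ?_, fun u x y v huv hux hxy hyv => ?_⟩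
  · rw [fromRel_toeplitzRel_adj hlo] at huv
    exact huv.residueLT_or_residueLT hlo hhi
  · rw [fromRel_toeplitzRel_adj hlo] at huv ⊢
    exact huv.of_between hlo hhi (hux.imp_left (congrArg f)) hxy (hyv.imp_left (congrArg f))

/-- The Toeplitz graph G_n(0^k 1^l 0^m): distinct vertices are adjacent iff the
residue of |i − j| modulo k+l+m lies in {k+1,...,k+l}.  It is word-representable. -/
theorem toeplitz_0k1l0m_word_representable (k l m n : ℕ)
    (hk : 0 < k) (hl : 0 < l) (hm : 0 < m) (hn : 0 < n) :
    WordRepresentable (SimpleGraph.fromRel (fun i j : Fin n =>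
      k + 1 ≤ ((i : ℤ) - (j : ℤ)).natAbs % (k + l + m) ∧
      ((i : ℤ) - (j : ℤ)).natAbs % (k + l + m) ≤ k + l)) :=
  toeplitz_0k1l0m_word_representable_general k.succ_pos (by omega) fun i : Fin n => (i : ℤ)
end

section
/- If a finite graph G admits a semi-transitive orientation then G is word-representable, and conversely every word-representable graph admits a semi-transitive orientation. -/
/-- `r` is an orientation of the graph `G`: each edge receives exactly one
direction, and non-edges receive none. -/
def IsOrientation {V : Type*} (r : V → V → Prop) (G : SimpleGraph V) : Prop :=
  (∀ x y : V, G.Adj x y ↔ (r x y ∨ r y x)) ∧ ∀ x y : V, ¬(r x y ∧ r y x)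

/-- `r` is semi-transitive: it is acyclic (its transitive closure is irreflexive),
and for any directed path v₁ → v₂ → ⋯ → v_k, if the edge from v₁ to v_k is
present then all edges vᵢ → vⱼ for i < j are present. -/
def IsSemiTransitive {V : Type*} (r : V → V → Prop) : Prop :=
  Irreflexive (Relation.TransGen r) ∧
  ∀ l : List V, l.Chain' r → ∀ hl : l ≠ [],
    r (l.head hl) (l.getLast hl) →
      ∀ i j : Fin l.length, i < j → r (l.get i) (l.get j)

/-!
Call `x` a leader of `y` in a word `w` if every prefix of `w` contains as many `x` as `y` or one
more; distinct letters alternate exactly when one of them leads the other. If `w` represents `G`,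
orient each edge from the leader to the follower. Prefix counts decrease along directed paths, so
along a path that has a shortcut edge they differ by at most one throughout, and all its vertices
lead all later ones.

Conversely, let `r` be semi-transitive. In a word containing every letter twice, `a` leads `b` iff
their occurrences are ordered as `a b a b`. Requiring this whenever `r a b` imposes an acyclic
relation on the occurrences. For `x ≠ y` without an edge `x → y`, semi-transitivity allows one more
constraint that destroys `x y x y`: the second `x` before the first `y` if there is a directed path
from `x` to `y`, and the first `y` before the first `x` otherwise. Any topological sort is then a
word for the pair `(x, y)`, and concatenating the words of all pairs gives a word for `G`.
-/

open Function Relation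

/-- The number of occurrences of the letter `x` among the first `n` letters of the word `w`, as a
function of `n`. Letters are compared through the pointwise order on these functions. -/
def prefixCount {V : Type*} [DecidableEq V] (w : List V) (x : V) (n : ℕ) : ℕ :=
  (w.take n).count x

/-- The letter `x` leads `y` in the word `w`: every prefix of `w` contains as many `x` as `y`, or
one more. For distinct letters this says that they alternate, starting with `x`. -/
def Leads {V : Type*} [DecidableEq V] (w : List V) (x y : V) : Prop :=
  ∀ n, prefixCount w y n ≤ prefixCount w x n ∧ prefixCount w x n ≤ prefixCount w y n + 1

/-- The relation orienting the edges of a graph represented by `w` from leader to follower. -/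
def LeadRel {V : Type*} [DecidableEq V] (w : List V) (x y : V) : Prop :=
  x ≠ y ∧ Leads w x y

section Words

variable {V : Type*} [DecidableEq V] {w : List V} {a b x y : V}

theorem prefixCount_cons_succ (n : ℕ) :
    prefixCount (a :: w) x (n + 1) = prefixCount w x n + if a = x then 1 else 0 := by
  simp [prefixCount, List.count_cons]

theorem prefixCount_append_of_le {u : List V} {n : ℕ} (hn : n ≤ u.length) :
    prefixCount (u ++ w) x n = prefixCount u x n := by
  rw [prefixCount, List.take_append_of_le_length hn, prefixCount]

theorem prefixCount_append_length_add (u : List V) (n : ℕ) :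
    prefixCount (u ++ w) x (u.length + n) = u.count x + prefixCount w x n := by
  rw [prefixCount, List.take_length_add_append, List.count_append, prefixCount]

theorem prefixCount_of_length_le {n : ℕ} (hn : w.length ≤ n) :
    prefixCount w x n = w.count x := by
  rw [prefixCount, List.take_of_length_le hn]

theorem eq_of_prefixCount_eq (hx : x ∈ w) (h : prefixCount w x = prefixCount w y) : x = y := by
  induction w with
  | nil => simp at hx
  | cons a w ih =>
    by_cases hax : a = x
    · subst hax
      simpa [prefixCount, List.count_singleton] using congrFun h 1
    · by_cases hay : a = y
      · subst hay
        simpa [prefixCount, hax] using congrFun h 1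
      · refine ih (List.mem_of_ne_of_mem (Ne.symm hax) hx) (funext fun n => ?_)
        simpa only [prefixCount_cons_succ, hax, hay, if_false, add_zero] using congrFun h (n + 1)

theorem leads_cons : Leads (a :: w) x y ↔ ∀ n,
    prefixCount (a :: w) y (n + 1) ≤ prefixCount (a :: w) x (n + 1) ∧
      prefixCount (a :: w) x (n + 1) ≤ prefixCount (a :: w) y (n + 1) + 1 := by
  refine ⟨fun h n => h (n + 1), fun h n => ?_⟩
  cases n with
  | zero => simp [prefixCount]
  | succ n => exact h n

theorem leads_cons_self (hxy : x ≠ y) : Leads (x :: w) x y ↔ Leads w y x := by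
  rw [leads_cons]
  refine forall_congr' fun n => ?_
  simp only [prefixCount_cons_succ, if_true, if_neg hxy]
  lia

theorem not_leads_cons_self (hxy : x ≠ y) : ¬Leads (y :: w) x y := by
  intro h
  simpa [prefixCount, hxy.symm] using (h 1).1

theorem leads_cons_of_ne (hx : a ≠ x) (hy : a ≠ y) : Leads (a :: w) x y ↔ Leads w x y := by
  rw [leads_cons]
  simp only [prefixCount_cons_succ, if_neg hx, if_neg hy, add_zero, Leads]

-- The extra `y` in front forces the restriction of `w` to `x` and `y` to start with `x`.
theorem leads_iff_isChain (hxy : x ≠ y) :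
    Leads w x y ↔ (y :: w.filter (fun z => z = x || z = y)).IsChain (· ≠ ·) := by
  induction w generalizing x y with
  | nil => simp [Leads, prefixCount]
  | cons a w ih =>
    by_cases hax : a = x
    · subst hax
      simp [leads_cons_self hxy, ih hxy.symm, hxy.symm, Bool.or_comm]
    · by_cases hay : a = y
      · subst hay
        simp [not_leads_cons_self hxy]
      · simp [leads_cons_of_ne hax hay, ih hxy, hax, hay]

theorem alternates_iff_leads (hxy : x ≠ y) : Alternates w x y ↔ Leads w x y ∨ Leads w y x := by
  have hswap : w.filter (fun z => z = y || z = x) = w.filter (fun z => z = x || z = y) := by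
    simp only [Bool.or_comm]
  have hmem : ∀ z ∈ w.filter (fun z => z = x || z = y), z = x ∨ z = y := by
    intro z hz
    simpa using (List.mem_filter.1 hz).2
  rw [leads_iff_isChain hxy, leads_iff_isChain hxy.symm, hswap]
  change (w.filter fun z => z = x || z = y).IsChain (· ≠ ·) ↔ _
  generalize w.filter (fun z => z = x || z = y) = l at hmem
  cases l with
  | nil => simp
  | cons c l =>
    rcases hmem c (by simp) with rfl | rfl
    · simp [hxy.symm]
    · simp [hxy]

theorem leads_append_iff {u : List V} (h : u.count x = u.count y) :
    Leads (u ++ w) x y ↔ Leads u x y ∧ Leads w x y := by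
  constructor
  · refine fun H => ⟨fun n => ?_, fun n => ?_⟩
    · rcases le_total n u.length with hn | hn
      · simpa only [prefixCount_append_of_le hn] using H n
      · simp [prefixCount_of_length_le hn, h]
    · simpa [prefixCount_append_length_add, h, add_assoc] using H (u.length + n)
  · rintro ⟨hu, hw⟩ n
    rcases le_total n u.length with hn | hn
    · simpa only [prefixCount_append_of_le hn] using hu n
    · obtain ⟨k, rfl⟩ := Nat.exists_eq_add_of_le hn
      simpa [prefixCount_append_length_add, h, add_assoc] using hw k

theorem leads_flatMap_iff {ι : Type*} {l : List ι} {f : ι → List V}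
    (h : ∀ i ∈ l, (f i).count x = (f i).count y) :
    Leads (l.flatMap f) x y ↔ ∀ i ∈ l, Leads (f i) x y := by
  induction l with
  | nil => simp [Leads, prefixCount]
  | cons i l ih =>
    rw [List.forall_mem_cons] at h
    rw [List.flatMap_cons, leads_append_iff h.1, ih h.2, List.forall_mem_cons]

end Words

section SemiTransitive

variable {V : Type*} {r : V → V → Prop}

theorem IsSemiTransitive.rel_of_transGen (hr : IsSemiTransitive r) {a x y b : V}
    (hax : ReflTransGen r a x) (hxy : TransGen r x y) (hyb : ReflTransGen r y b)
    (hab : r a b) : r x y := by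
  obtain ⟨z, hxz, hzy⟩ := TransGen.head'_iff.1 hxy
  obtain ⟨p, hp, hpchain, hpa, hpx⟩ := List.exists_isChain_ne_nil_of_relationReflTransGen hax
  obtain ⟨q, hq, hqchain, hqz, hqy⟩ := List.exists_isChain_ne_nil_of_relationReflTransGen hzy
  obtain ⟨t, htchain, htb⟩ := List.exists_isChain_cons_of_relationReflTransGen hyb
  have hqt : (q ++ t).IsChain r := by
    refine hqchain.append htchain.tail ?_
    simpa [List.getLast?_eq_some_getLast hq, hqy] using (List.isChain_cons.1 htchain).1
  have hpqt : (p ++ (q ++ t)).IsChain r := by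
    refine hpchain.append hqt ?_
    simpa [List.getLast?_eq_some_getLast hp, hpx, List.head?_append,
      List.head?_eq_some_head hq, hqz] using hxz
  have hhead : (p ++ (q ++ t)).head (by simp [hp]) = a := by
    rw [List.head_append_of_ne_nil hp, hpa]
  have hlast : (p ++ (q ++ t)).getLast (by simp [hp]) = b := by
    cases t <;> simp_all
  have hpairwise : (p ++ (q ++ t)).Pairwise r :=
    List.pairwise_iff_get.2 (hr.2 _ hpqt (by simp [hp]) (by rwa [hhead, hlast]))
  exact (List.pairwise_append.1 hpairwise).2.2 x (hpx ▸ List.getLast_mem hp) y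
    (List.mem_append_left t (hqy ▸ List.getLast_mem hq))

theorem isSemiTransitive_of_rel_of_transGen [hirr : Std.Irrefl (TransGen r)]
    (h : ∀ {a x y b}, ReflTransGen r a x → TransGen r x y → ReflTransGen r y b → r a b → r x y) :
    IsSemiTransitive r := by
  refine ⟨hirr.irrefl, fun l hl hne hends i j hij => ?_⟩
  have hchain : l.IsChain r := hl
  have hpath : l.Pairwise (TransGen r) :=
    List.isChain_iff_pairwise.1 (hchain.imp fun _ _ => .single)
  have hrefl : l.Pairwise (ReflTransGen r) := hpath.imp TransGen.to_reflTransGen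
  exact h (hrefl.rel_head (l.get_mem i)) (List.pairwise_iff_get.1 hpath i j hij)
    (hrefl.rel_getLast (l.get_mem j)) hends

end SemiTransitive

section Orientation

variable {V : Type*} [DecidableEq V] {w : List V} {x y : V} {G : SimpleGraph V}

theorem prefixCount_lt_of_transGen_leadRel (hw : ∀ v, v ∈ w) (h : TransGen (LeadRel w) x y) :
    prefixCount w y < prefixCount w x := by
  have hstep : ∀ {a b}, LeadRel w a b → prefixCount w b < prefixCount w a := fun {a b} hab =>
    lt_of_le_of_ne (fun n => (hab.2 n).1) fun heq => hab.1 (eq_of_prefixCount_eq (hw b) heq).symm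
  induction h with
  | single h => exact hstep h
  | tail _ h ih => exact (hstep h).trans ih

theorem prefixCount_le_of_reflTransGen_leadRel (h : ReflTransGen (LeadRel w) x y) :
    prefixCount w y ≤ prefixCount w x := by
  induction h with
  | refl => exact le_rfl
  | tail _ h ih => exact le_trans (fun n => (h.2 n).1) ih

theorem isSemiTransitive_leadRel (hw : ∀ v, v ∈ w) : IsSemiTransitive (LeadRel w) := by
  have : Std.Irrefl (TransGen (LeadRel w)) :=
    ⟨fun x hx => (prefixCount_lt_of_transGen_leadRel hw hx).false⟩
  refine isSemiTransitive_of_rel_of_transGen fun {a x y b} hax hxy hyb hab => ?_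
  have hlt := prefixCount_lt_of_transGen_leadRel hw hxy
  refine ⟨fun heq => hlt.ne (congrArg _ heq.symm), fun n => ⟨hlt.le n, ?_⟩⟩
  calc prefixCount w x n
      ≤ prefixCount w a n := prefixCount_le_of_reflTransGen_leadRel hax n
    _ ≤ prefixCount w b n + 1 := (hab.2 n).2
    _ ≤ prefixCount w y n + 1 :=
        Nat.add_le_add_right (prefixCount_le_of_reflTransGen_leadRel hyb n) 1

theorem Represents.isOrientation_leadRel (hw : Represents w G) :
    IsOrientation (LeadRel w) G := by
  refine ⟨fun x y => ?_, ?_⟩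
  · by_cases hxy : x = y
    · simp [hxy, LeadRel]
    · simp [← hw.2 x y hxy, alternates_iff_leads hxy, LeadRel, hxy, Ne.symm hxy]
  · rintro x y ⟨hxy, hyx⟩
    exact (isSemiTransitive_leadRel hw.1).1 x (.tail (.single hxy) hyx)

end Orientation

section TopologicalSort

variable {P : Type*} {R : P → P → Prop} {u v : P}

theorem irrefl_transGen_insert [hR : Std.Irrefl (TransGen R)] (hvu : ¬ReflTransGen R v u) :
    Std.Irrefl (TransGen fun a b => R a b ∨ a = u ∧ b = v) := by
  have hdecomp {a b : P} (hab : TransGen (fun a b => R a b ∨ a = u ∧ b = v) a b) :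
      TransGen R a b ∨ ReflTransGen R a u ∧ ReflTransGen R v b := by
    induction hab with
    | single h =>
      rcases h with h | ⟨rfl, rfl⟩
      · exact .inl (.single h)
      · exact .inr ⟨.refl, .refl⟩
    | tail _ h ih =>
      rcases h with h | ⟨rfl, rfl⟩
      · exact ih.imp (·.tail h) (And.imp_right (·.tail h))
      · exact .inr ⟨ih.elim TransGen.to_reflTransGen And.left, .refl⟩
  refine ⟨fun a ha => ?_⟩
  rcases hdecomp ha with haa | ⟨hau, hva⟩
  · exact hR.irrefl a haa
  · exact hvu (hva.trans hau)

variable [BEq P]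

/-- The list `L` enumerates the type `P` without repetition, in an order extending the relation
`R`. -/
structure IsTopologicalSort (R : P → P → Prop) (L : List P) : Prop where
  nodup : L.Nodup
  mem (a : P) : a ∈ L
  idxOf_lt {a b : P} : R a b → L.idxOf a < L.idxOf b

theorem exists_isTopologicalSort [LawfulBEq P] [Finite P] [hR : Std.Irrefl (TransGen R)] :
    ∃ L, IsTopologicalSort R L := by
  classical
  cases nonempty_fintype P
  have : IsPartialOrder P (ReflTransGen R) :=
    { refl := fun _ => .refl
      trans := fun _ _ _ => .trans
      antisymm := fun a b hab hba => by
        rcases reflTransGen_iff_eq_or_transGen.1 hab with h | h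
        · exact h.symm
        · exact (hR.irrefl a (h.trans_left hba)).elim }
  obtain ⟨s, _, hs⟩ := extend_partialOrder (ReflTransGen R)
  have hsorted : (Finset.univ.sort s).Pairwise s := Finset.pairwise_sort _ _
  have hmem : ∀ a : P, a ∈ Finset.univ.sort s := by simp
  refine ⟨Finset.univ.sort s, Finset.sort_nodup _ _, hmem, fun {a b} hab => ?_⟩
  by_contra! hle
  have hba : s b a := by
    simpa using hsorted.rel_get_of_le (a := ⟨_, List.idxOf_lt_length_of_mem (hmem b)⟩)
      (b := ⟨_, List.idxOf_lt_length_of_mem (hmem a)⟩) hle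
  have heq : a = b := antisymm_of s (hs _ _ (.single hab)) hba
  exact hR.irrefl a (.single (heq ▸ hab))

theorem exists_isTopologicalSort_idxOf_lt [LawfulBEq P] [Finite P] [Std.Irrefl (TransGen R)]
    (hvu : ¬ReflTransGen R v u) :
    ∃ L, IsTopologicalSort R L ∧ L.idxOf u < L.idxOf v := by
  have := irrefl_transGen_insert hvu
  obtain ⟨L, hL⟩ := exists_isTopologicalSort (R := fun a b => R a b ∨ a = u ∧ b = v)
  exact ⟨L, ⟨hL.nodup, hL.mem, fun h => hL.idxOf_lt (.inl h)⟩, hL.idxOf_lt (.inr ⟨rfl, rfl⟩)⟩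

end TopologicalSort

section Occurrences

variable {V : Type*} {r : V → V → Prop} {x y : V}

/-- The constraints on the two occurrences of each letter in a word in which `a` leads `b` whenever
`r a b`. The first occurrence of `v` is encoded as `(v, false)` and the second as `(v, true)`. -/
inductive OccurrenceRel (r : V → V → Prop) : V × Bool → V × Bool → Prop
  | level {a b : V} (i : Bool) : r a b → OccurrenceRel r (a, i) (b, i)
  | cross {a b : V} : r a b → OccurrenceRel r (b, false) (a, true)
  | self (a : V) : OccurrenceRel r (a, false) (a, true)

theorem transGen_occurrenceRel_le_lex {p q : V × Bool} (h : TransGen (OccurrenceRel r) p q) :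
    Prod.Lex (· < ·) (TransGen r) p.swap q.swap := by
  have hstep : OccurrenceRel r ≤ (Prod.Lex (· < ·) (TransGen r) on Prod.swap) := by
    rintro _ _ (⟨i, h⟩ | h | a)
    · exact .right i (.single h)
    · exact .left _ _ Bool.false_lt_true
    · exact .left _ _ Bool.false_lt_true
  simpa only [transGen_eq_self] using TransGen.lift Prod.swap hstep _ _ h

instance irrefl_transGen_occurrenceRel [Std.Irrefl (TransGen r)] :
    Std.Irrefl (TransGen (OccurrenceRel r)) :=
  ⟨fun p hp => Std.Irrefl.irrefl p.swap (transGen_occurrenceRel_le_lex hp)⟩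

theorem reflTransGen_of_occurrenceRel_false_false
    (h : ReflTransGen (OccurrenceRel r) (y, false) (x, false)) : ReflTransGen r y x := by
  rcases reflTransGen_iff_eq_or_transGen.1 h with heq | h
  · rw [(Prod.mk.inj heq).1]
  · have hyx : TransGen r y x := by
      simpa [Prod.lex_def] using transGen_occurrenceRel_le_lex h
    exact hyx.to_reflTransGen

-- The middle step `d → c` runs against the path: it comes from the only constraint, `cross`, that
-- passes from first to second occurrences and reverses an edge.
theorem exists_reflTransGen_of_occurrenceRel_false_true
    (h : ReflTransGen (OccurrenceRel r) (y, false) (x, true)) :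
    ∃ c d, ReflTransGen r y c ∧ ReflGen r d c ∧ ReflTransGen r d x := by
  generalize hq : (x, true) = q at h
  induction h generalizing x with
  | refl => simp at hq
  | tail hyp h ih =>
    cases h with
    | level i h =>
      obtain ⟨rfl, rfl⟩ := Prod.mk.inj hq
      obtain ⟨c, d, hyc, hdc, hdx⟩ := ih rfl
      exact ⟨c, d, hyc, hdc, hdx.tail h⟩
    | cross h =>
      obtain ⟨rfl, -⟩ := Prod.mk.inj hq
      exact ⟨_, _, reflTransGen_of_occurrenceRel_false_false hyp, .single h, .refl⟩
    | self =>
      obtain ⟨rfl, -⟩ := Prod.mk.inj hq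
      exact ⟨_, _, reflTransGen_of_occurrenceRel_false_false hyp, .refl, .refl⟩

variable [DecidableEq V] {L : List (V × Bool)}

theorem count_map_fst (L : List (V × Bool)) (x : V) :
    (L.map Prod.fst).count x = L.count (x, false) + L.count (x, true) := by
  induction L with
  | nil => rfl
  | cons p L ih =>
    obtain ⟨v, _ | _⟩ := p <;> simp [List.count_cons, ih] <;> lia

theorem prefixCount_map_fst (hnodup : L.Nodup) (hmem : ∀ p, p ∈ L) (x : V) (n : ℕ) :
    prefixCount (L.map Prod.fst) x n =
      (if L.idxOf (x, false) < n then 1 else 0) + if L.idxOf (x, true) < n then 1 else 0 := by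
  have hcount (p : V × Bool) : (L.take n).count p = if L.idxOf p < n then 1 else 0 := by
    simp only [(hnodup.sublist (L.take_sublist n)).count, List.mem_take_iff_idxOf_lt (hmem p)]
  rw [prefixCount, ← List.map_take, count_map_fst, hcount, hcount]

theorem count_map_fst_eq_two (hnodup : L.Nodup) (hmem : ∀ p, p ∈ L) (x : V) :
    (L.map Prod.fst).count x = 2 := by
  rw [count_map_fst, List.count_eq_one_of_mem hnodup (hmem _),
    List.count_eq_one_of_mem hnodup (hmem _)]

theorem leads_map_fst_iff (hnodup : L.Nodup) (hmem : ∀ p, p ∈ L)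
    (hself : ∀ v, L.idxOf (v, false) < L.idxOf (v, true)) (hxy : x ≠ y) :
    Leads (L.map Prod.fst) x y ↔ L.idxOf (x, false) < L.idxOf (y, false) ∧
      L.idxOf (y, false) < L.idxOf (x, true) ∧ L.idxOf (x, true) < L.idxOf (y, true) := by
  have hne (i j : Bool) : L.idxOf (x, i) ≠ L.idxOf (y, j) := fun h =>
    hxy (congrArg Prod.fst (List.idxOf_inj (hmem _) |>.1 h))
  have hx := hself x
  have hy := hself y
  simp only [Leads, prefixCount_map_fst hnodup hmem]
  constructor
  · intro h
    have := h (L.idxOf (y, false) + 1)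
    have := h (L.idxOf (x, true) + 1)
    have := h (L.idxOf (y, true) + 1)
    have := hne false false
    have := hne true false
    have := hne true true
    grind
  · rintro ⟨h₁, h₂, h₃⟩ n
    split_ifs <;> lia

theorem IsTopologicalSort.leads_iff (hL : IsTopologicalSort (OccurrenceRel r) L) (hxy : x ≠ y) :
    Leads (L.map Prod.fst) x y ↔ L.idxOf (x, false) < L.idxOf (y, false) ∧
      L.idxOf (y, false) < L.idxOf (x, true) ∧ L.idxOf (x, true) < L.idxOf (y, true) :=
  leads_map_fst_iff hL.nodup hL.mem (fun v => hL.idxOf_lt (.self v)) hxy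

theorem IsTopologicalSort.leads_of_rel (hL : IsTopologicalSort (OccurrenceRel r) L)
    (hxy : r x y) : Leads (L.map Prod.fst) x y := by
  have hlevel (i : Bool) := hL.idxOf_lt (.level i hxy)
  have hne : x ≠ y := fun h => (hlevel false).ne (by rw [h])
  exact (hL.leads_iff hne).2 ⟨hlevel false, hL.idxOf_lt (.cross hxy), hlevel true⟩

theorem IsSemiTransitive.exists_isTopologicalSort_not_leads [Finite V] (hr : IsSemiTransitive r)
    (hne : x ≠ y) (hxy : ¬r x y) :
    ∃ L, IsTopologicalSort (OccurrenceRel r) L ∧ ¬Leads (L.map Prod.fst) x y := by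
  have hirr : Std.Irrefl (TransGen r) := ⟨hr.1⟩
  by_cases hpath : TransGen r x y
  · have hunreach : ¬ReflTransGen (OccurrenceRel r) (y, false) (x, true) := by
      intro h
      obtain ⟨c, d, hyc, hdc, hdx⟩ := exists_reflTransGen_of_occurrenceRel_false_true h
      cases hdc with
      | refl => exact hr.1 x (hpath.trans_left (hyc.trans hdx))
      | single hdc => exact hxy (hr.rel_of_transGen hdx hpath hyc hdc)
    obtain ⟨L, hL, hlt⟩ := exists_isTopologicalSort_idxOf_lt hunreach
    exact ⟨L, hL, fun h => hlt.asymm ((hL.leads_iff hne).1 h).2.1⟩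
  · have hunreach : ¬ReflTransGen (OccurrenceRel r) (x, false) (y, false) := fun h =>
      (reflTransGen_iff_eq_or_transGen.1 (reflTransGen_of_occurrenceRel_false_false h)).elim
        hne.symm hpath
    obtain ⟨L, hL, hlt⟩ := exists_isTopologicalSort_idxOf_lt hunreach
    exact ⟨L, hL, fun h => hlt.asymm ((hL.leads_iff hne).1 h).1⟩

theorem IsSemiTransitive.exists_isTopologicalSort_leads_imp [Finite V] (hr : IsSemiTransitive r)
    (x y : V) :
    ∃ L, IsTopologicalSort (OccurrenceRel r) L ∧ (x ≠ y → Leads (L.map Prod.fst) x y → r x y) := by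
  by_cases hxy : x ≠ y ∧ ¬r x y
  · obtain ⟨L, hL, hnot⟩ := hr.exists_isTopologicalSort_not_leads hxy.1 hxy.2
    exact ⟨L, hL, fun _ h => (hnot h).elim⟩
  · have hirr : Std.Irrefl (TransGen r) := ⟨hr.1⟩
    obtain ⟨L, hL⟩ := exists_isTopologicalSort (R := OccurrenceRel r)
    exact ⟨L, hL, fun hne _ => not_not.1 fun h => hxy ⟨hne, h⟩⟩

theorem IsSemiTransitive.exists_word_leads_iff [Finite V] (hr : IsSemiTransitive r) :
    ∃ w : List V, (∀ v, v ∈ w) ∧ ∀ x y, x ≠ y → (Leads w x y ↔ r x y) := by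
  cases nonempty_fintype V
  choose L hL hLr using fun p : V × V => hr.exists_isTopologicalSort_leads_imp p.1 p.2
  have hcount (p : V × V) (v : V) : ((L p).map Prod.fst).count v = 2 :=
    count_map_fst_eq_two (hL p).nodup (hL p).mem v
  refine ⟨(Finset.univ : Finset (V × V)).toList.flatMap fun p => (L p).map Prod.fst,
    fun v => ?_, fun x y hxy => ?_⟩
  · refine List.mem_flatMap.2 ⟨(v, v), by simp, List.count_pos_iff.1 ?_⟩
    rw [hcount]
    exact Nat.two_pos
  · rw [leads_flatMap_iff fun p _ => (hcount p x).trans (hcount p y).symm]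
    exact ⟨fun h => hLr (x, y) hxy (h (x, y) (by simp)), fun h p _ => (hL p).leads_of_rel h⟩

end Occurrences

/-- A finite graph is word-representable if and only if it admits a
semi-transitive orientation. -/
theorem word_representable_iff_semi_transitive {V : Type*} [Fintype V] [DecidableEq V]
    (G : SimpleGraph V) :
    (∃ r : V → V → Prop, IsOrientation r G ∧ IsSemiTransitive r) ↔
      WordRepresentable G := by
  constructor
  · rintro ⟨r, hor, hr⟩
    obtain ⟨w, hmem, hlead⟩ := hr.exists_word_leads_iff
    refine ⟨w, hmem, fun x y hxy => ?_⟩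
    rw [alternates_iff_leads hxy, hlead x y hxy, hlead y x hxy.symm, hor.1]
  · rintro ⟨w, hw⟩
    exact ⟨LeadRel w, hw.isOrientation_leadRel, isSemiTransitive_leadRel hw.1⟩
end
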